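/- For any 1/2 < t < 1 and any positive integer n₁ ≥ 2e^{16/(1-t)²}, one has (7/40)·n₁/((1−t)·p_{n₁}^t) < ∑_{n=1}^{n₁−1} p_n^{-t} < (20/3)·2^t·n₁/((1−t)·p_{n₁}^t). -/

import Mathlib

/-- The `n`-th prime number, 1-indexed: `nthPrime 1 = 2`, `nthPrime 2 = 3`, ... -/
noncomputable def nthPrime (n : ℕ) : ℕ := Nat.nth Nat.Prime (n - 1)

/-!
Chebyshev's bounds sandwich `p_n` between constant multiples of `n log n`, and comparison of
`∑ n^(-t)` with `∫ x^(-t) dx` then evaluates the sum of `p_n^(-t)` for `n < N` as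
`N^(1-t) (log N)^(-t) / (1-t)`, which is `N / ((1-t) p_N^t)`, up to constants. The numerical
constants survive for two reasons. In the lower bound, the factor `log (p_N + 1)` that replaces
`log (p_n + 1)` reappears in the lower bound for `p_N` and cancels. In the upper bound,
`log p_n ≥ (log N) / 2` for `n > √N`, while the terms with `n ≤ √N` contribute at most
`N^((1-t)/2) / (1-t)`, which is negligible because `N` is huge in terms of `1 - t`.
-/

section IntegralComparison

open Finset

variable {t : ℝ}

theorem antitoneOn_rpow_neg_Icc (ht₀ : 0 ≤ t) {a b : ℝ} (ha : 0 < a) :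
    AntitoneOn (fun x : ℝ ↦ x ^ (-t)) (Set.Icc a b) :=
  (Real.antitoneOn_rpow_Ioi_of_exponent_nonpos (neg_nonpos.2 ht₀)).mono
    fun _ hx ↦ ha.trans_le hx.1

theorem integral_rpow_neg (ht₁ : t < 1) (a b : ℝ) :
    ∫ x in a..b, x ^ (-t) = (b ^ (1 - t) - a ^ (1 - t)) / (1 - t) := by
  rw [integral_rpow (.inl (by linarith)), neg_add_eq_sub]

theorem rpow_sub_rpow_div_le_sum_Ico_rpow_neg (ht₀ : 0 ≤ t) (ht₁ : t < 1) {a b : ℕ}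
    (ha : 0 < a) (hab : a ≤ b) :
    ((b : ℝ) ^ (1 - t) - (a : ℝ) ^ (1 - t)) / (1 - t) ≤ ∑ n ∈ Ico a b, (n : ℝ) ^ (-t) := by
  rw [← integral_rpow_neg ht₁]
  exact (antitoneOn_rpow_neg_Icc ht₀ (by positivity)).integral_le_sum_Ico hab

theorem sum_Icc_rpow_neg_le (ht₀ : 0 ≤ t) (ht₁ : t < 1) (m : ℕ) :
    ∑ n ∈ Icc 1 m, (n : ℝ) ^ (-t) ≤ (m : ℝ) ^ (1 - t) / (1 - t) := by
  have hs : 0 < 1 - t := sub_pos.2 ht₁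
  rcases Nat.eq_zero_or_pos m with rfl | hm
  · simp [Real.zero_rpow hs.ne']
  have htail : ∑ n ∈ Ico 1 m, ((n + 1 : ℕ) : ℝ) ^ (-t) ≤ ((m : ℝ) ^ (1 - t) - 1) / (1 - t) := by
    have := (antitoneOn_rpow_neg_Icc ht₀ (a := (1 : ℕ)) (b := m) (by simp)).sum_le_integral_Ico hm
    rwa [integral_rpow_neg ht₁, Nat.cast_one, Real.one_rpow] at this
  have hhead : 1 ≤ 1 / (1 - t) := (one_le_div hs).2 (by linarith)
  calc ∑ n ∈ Icc 1 m, (n : ℝ) ^ (-t)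
      = 1 + ∑ n ∈ Ico 1 m, ((n + 1 : ℕ) : ℝ) ^ (-t) := by
        rw [← Ico_add_one_right_eq_Icc, sum_eq_sum_Ico_succ_bot (by lia), ← sum_Ico_add']
        simp
    _ ≤ 1 / (1 - t) + ((m : ℝ) ^ (1 - t) - 1) / (1 - t) := add_le_add hhead htail
    _ = (m : ℝ) ^ (1 - t) / (1 - t) := by ring

theorem le_sum_rpow_neg_of_le_mul_add_one (ht₀ : 0 ≤ t) (ht₁ : t < 1) {a : ℕ → ℝ} {X : ℝ}
    (hX : 0 < X) {m : ℕ} (ha : ∀ n ∈ Icc 1 m, 0 < a n)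
    (haX : ∀ n ∈ Icc 1 m, a n ≤ X * (n + 1)) :
    X ^ (-t) * (((m + 1 : ℝ) ^ (1 - t) - 2) / (1 - t)) ≤ ∑ n ∈ Icc 1 m, a n ^ (-t) := by
  have : 0 < 1 - t := sub_pos.2 ht₁
  have htwo : (2 : ℝ) ^ (1 - t) ≤ 2 := Real.rpow_le_self_of_one_le (by simp) (by linarith)
  have hcompare : ((m + 1 : ℝ) ^ (1 - t) - 2) / (1 - t) ≤ ∑ n ∈ Icc 1 m, (n + 1 : ℝ) ^ (-t) :=
    calc ((m + 1 : ℝ) ^ (1 - t) - 2) / (1 - t)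
        ≤ (((m + 2 : ℕ) : ℝ) ^ (1 - t) - ((2 : ℕ) : ℝ) ^ (1 - t)) / (1 - t) := by
          push_cast
          gcongr
          norm_num
      _ ≤ ∑ n ∈ Ico 2 (m + 2), (n : ℝ) ^ (-t) :=
          rpow_sub_rpow_div_le_sum_Ico_rpow_neg ht₀ ht₁ two_pos (by lia)
      _ = ∑ n ∈ Icc 1 m, (n + 1 : ℝ) ^ (-t) := by
          rw [← Ico_add_one_right_eq_Icc, ← sum_Ico_add' _ 1 (m + 1) 1]
          simp
  calc X ^ (-t) * (((m + 1 : ℝ) ^ (1 - t) - 2) / (1 - t))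
      ≤ X ^ (-t) * ∑ n ∈ Icc 1 m, (n + 1 : ℝ) ^ (-t) := by gcongr
    _ = ∑ n ∈ Icc 1 m, (X * (n + 1)) ^ (-t) := by
        rw [mul_sum]
        exact sum_congr rfl fun n _ ↦ (Real.mul_rpow hX.le (by positivity)).symm
    _ ≤ ∑ n ∈ Icc 1 m, a n ^ (-t) := sum_le_sum fun n hn ↦
        Real.rpow_le_rpow_of_nonpos (ha n hn) (haX n hn) (neg_nonpos.2 ht₀)

theorem sum_rpow_neg_le_of_le_of_mul_le (ht₀ : 0 ≤ t) (ht₁ : t < 1) {a : ℕ → ℝ} {Y : ℝ}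
    (hY : 0 < Y) {k m : ℕ} (hkm : k ≤ m) (hsmall : ∀ n ∈ Ioc 0 k, n ≤ a n)
    (hlarge : ∀ n ∈ Ioc k m, Y * n ≤ a n) :
    ∑ n ∈ Icc 1 m, a n ^ (-t) ≤
      (k : ℝ) ^ (1 - t) / (1 - t) + Y ^ (-t) * ((m : ℝ) ^ (1 - t) / (1 - t)) := by
  have hpos {n l : ℕ} (hn : n ∈ Ioc l m) : (0 : ℝ) < n :=
    mod_cast (Nat.zero_le l).trans_lt (mem_Ioc.1 hn).1
  have hhead : ∑ n ∈ Ioc 0 k, a n ^ (-t) ≤ (k : ℝ) ^ (1 - t) / (1 - t) :=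
    calc ∑ n ∈ Ioc 0 k, a n ^ (-t) ≤ ∑ n ∈ Ioc 0 k, (n : ℝ) ^ (-t) := sum_le_sum fun n hn ↦
          Real.rpow_le_rpow_of_nonpos (hpos (Ioc_subset_Ioc_right hkm hn)) (hsmall n hn)
            (neg_nonpos.2 ht₀)
      _ ≤ (k : ℝ) ^ (1 - t) / (1 - t) := sum_Icc_rpow_neg_le ht₀ ht₁ k
  have htail : ∑ n ∈ Ioc k m, a n ^ (-t) ≤ Y ^ (-t) * ((m : ℝ) ^ (1 - t) / (1 - t)) :=
    calc ∑ n ∈ Ioc k m, a n ^ (-t) ≤ ∑ n ∈ Ioc k m, (Y * n) ^ (-t) := sum_le_sum fun n hn ↦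
          Real.rpow_le_rpow_of_nonpos (mul_pos hY (hpos hn)) (hlarge n hn) (neg_nonpos.2 ht₀)
      _ = Y ^ (-t) * ∑ n ∈ Ioc k m, (n : ℝ) ^ (-t) := by
          rw [mul_sum]
          exact sum_congr rfl fun n _ ↦ Real.mul_rpow hY.le n.cast_nonneg
      _ ≤ Y ^ (-t) * ∑ n ∈ Ioc 0 m, (n : ℝ) ^ (-t) := by
          gcongr
          exact Nat.zero_le k
      _ ≤ Y ^ (-t) * ((m : ℝ) ^ (1 - t) / (1 - t)) := by
          gcongr
          exact sum_Icc_rpow_neg_le ht₀ ht₁ m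
  calc ∑ n ∈ Icc 1 m, a n ^ (-t)
      = ∑ n ∈ Ioc 0 k, a n ^ (-t) + ∑ n ∈ Ioc k m, a n ^ (-t) :=
        (sum_Ioc_consecutive _ k.zero_le hkm).symm
    _ ≤ _ := add_le_add hhead htail

end IntegralComparison

section LogEstimates

open Real

theorem log_le_sqrt_div_five {x : ℝ} (hx : exp 8 ≤ x) : log x ≤ √x / 5 := by
  have hx₀ : 0 < x := (exp_pos 8).trans_le hx
  have hexp_four : (40 : ℝ) ≤ exp 4 := by
    calc (40 : ℝ) ≤ 2.7182818283 ^ 4 := by norm_num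
      _ ≤ exp 1 ^ 4 := by gcongr; exact exp_one_gt_d9.le
      _ = exp 4 := by rw [← exp_nat_mul]; norm_num
  have hsqrt : √(exp 8) = exp 4 := by
    rw [← exp_half]; norm_num
  have hquot : log x / √x ≤ 8 / exp 4 := by
    have := log_div_sqrt_antitoneOn (Set.mem_Ici.2 (exp_le_exp.2 (by norm_num)))
      (Set.mem_Ici.2 ((exp_le_exp.2 (by norm_num)).trans hx)) hx
    simpa only [log_exp, hsqrt] using this
  have hfifth : 8 / exp 4 ≤ 1 / 5 := by
    rw [div_le_div_iff₀ (exp_pos 4) (by norm_num)]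
    linarith
  have := (div_le_iff₀ (sqrt_pos.2 hx₀)).1 (hquot.trans hfifth)
  linarith

theorem four_mul_log_le_rpow_half {s x : ℝ} (hs₀ : 0 < s) (hs₁ : s ≤ 1) (hx₀ : 0 < x)
    (hx : 16 / s ^ 2 ≤ log x) : 4 * log x ≤ x ^ (s / 2) := by
  set u := log x * (s / 2) with hu
  have hlog : 16 ≤ log x * s ^ 2 := (div_le_iff₀ (by positivity)).1 hx
  have hlog₀ : 0 < log x := (by positivity : 0 < 16 / s ^ 2).trans_le hx
  have hu_ge : 8 ≤ u := by
    have : log x * s ^ 2 ≤ log x * s := by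
      gcongr
      exact pow_le_of_le_one hs₀.le hs₁ two_ne_zero
    linarith
  have hlog_le : 4 * log x ≤ u ^ 2 :=
    calc 4 * log x = 16 * (log x / 4) := by ring
      _ ≤ log x * s ^ 2 * (log x / 4) := by gcongr
      _ = u ^ 2 := by rw [hu]; ring
  calc 4 * log x ≤ u ^ 2 := hlog_le
    _ ≤ u ^ 2 * (u / 6) := le_mul_of_one_le_right (sq_nonneg u) (by linarith)
    _ = u ^ 3 / Nat.factorial 3 := by norm_num [Nat.factorial]; ring
    _ ≤ exp u := pow_div_factorial_le_exp u (by linarith) 3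
    _ = x ^ (s / 2) := (rpow_def_of_pos hx₀ _).symm

theorem mul_rpow_mul_div_rpow_neg_le {t a b x : ℝ} (ht₁ : t ≤ 1) (ha : 0 ≤ a) (hb : 1 ≤ b)
    (hx : 0 < x) : (a * x) ^ t * (x / b) ^ (-t) ≤ b * a ^ t := by
  have hb₀ : 0 < b := one_pos.trans_le hb
  calc (a * x) ^ t * (x / b) ^ (-t) = (a * x / (x / b)) ^ t := by
        rw [rpow_neg (by positivity), ← div_eq_mul_inv, ← div_rpow (by positivity) (by positivity)]
    _ = (b * a) ^ t := by
        congr 1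
        field_simp
    _ = b ^ t * a ^ t := mul_rpow hb₀.le ha
    _ ≤ b * a ^ t := by
        gcongr
        exact rpow_le_self_of_one_le hb ht₁

theorem ne_zero_of_log_pos {n : ℕ} (hn : 0 < log n) : n ≠ 0 := by
  rintro rfl
  simp at hn

theorem hundred_le_of_sixteen_le_log {n : ℕ} (hn : 16 ≤ log n) : (100 : ℝ) ≤ n := by
  have hn₀ : (0 : ℝ) < n := mod_cast Nat.pos_of_ne_zero (ne_zero_of_log_pos (by linarith))
  calc (100 : ℝ) ≤ 1 + 16 + 16 ^ 2 / 2 := by norm_num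
    _ ≤ exp 16 := quadratic_le_exp_of_nonneg (by norm_num)
    _ ≤ n := (le_log_iff_exp_le hn₀).1 hn

end LogEstimates

section Chebyshev

open Real

theorem primeCounting_floor_mul_log_le {x : ℝ} (hx : exp 8 ≤ x) :
    Nat.primeCounting ⌊x⌋₊ * log x ≤ 3 * x := by
  have hx₁ : 1 < x := (one_lt_exp_iff.2 (by norm_num)).trans_le hx
  have hx₀ : 0 < x := one_pos.trans hx₁
  have hlog : 0 < log x := log_pos hx₁
  have hlog_four : log 4 = 2 * log 2 := by
    rw [show (4 : ℝ) = 2 ^ 2 by norm_num, log_pow, Nat.cast_ofNat]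
  calc Nat.primeCounting ⌊x⌋₊ * log x
      ≤ (log 4 * x / (log x / 2) + √x) * log x := by
        rw [← log_sqrt hx₀.le]
        gcongr
        exact Chebyshev.pi_le_log4_mul_div hx₁
    _ = 4 * log 2 * x + √x * log x := by
        rw [hlog_four]
        field_simp
        ring
    _ ≤ 4 * log 2 * x + √x * (√x / 5) := by
        gcongr
        exact log_le_sqrt_div_five hx
    _ = (4 * log 2 + 1 / 5) * x := by
        linear_combination mul_self_sqrt hx₀.le / 5
    _ ≤ 3 * x := by
        gcongr
        linarith [log_two_lt_d9]

end Chebyshev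

section NthPrime

open Real

theorem nthPrime_monotone : Monotone nthPrime := fun _ _ h ↦
  Nat.nth_monotone Nat.infinite_setOfPred_prime (Nat.sub_le_sub_right h 1)

theorem lt_nthPrime (n : ℕ) : n < nthPrime n := by
  have : n - 1 + 2 ≤ nthPrime n := Nat.add_two_le_nth_prime (n - 1)
  lia

theorem log_nthPrime_add_one_pos (n : ℕ) : 0 < log (nthPrime n + 1) :=
  log_pos (lt_add_of_pos_left 1 (mod_cast (lt_nthPrime n).pos))

theorem primeCounting_nthPrime {n : ℕ} (hn : n ≠ 0) : Nat.primeCounting (nthPrime n) = n :=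
  calc Nat.primeCounting (nthPrime n) = n - 1 + 1 :=
        Nat.count_nth_succ_of_infinite Nat.infinite_setOfPred_prime (n - 1)
    _ = n := Nat.succ_pred hn

theorem nthPrime_mul_log_two_le {n : ℕ} (hn : n ≠ 0) :
    nthPrime n * log 2 ≤ (n + 1) * log (nthPrime n + 1) := by
  have hp : (1 : ℝ) < nthPrime n := mod_cast (Nat.one_le_iff_ne_zero.2 hn).trans_lt (lt_nthPrime n)
  have hpi := Chebyshev.pi_ge (nthPrime n)
  rw [primeCounting_nthPrime hn, div_le_iff₀ (log_pos hp)] at hpi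
  calc nthPrime n * log 2 ≤ n * log (nthPrime n) + log (nthPrime n + 1) := by linarith
    _ ≤ n * log (nthPrime n + 1) + log (nthPrime n + 1) := by gcongr; linarith
    _ = (n + 1) * log (nthPrime n + 1) := by ring

theorem mul_log_nthPrime_le {n : ℕ} (hn : 8 ≤ log n) :
    n * log (nthPrime n) ≤ 3 * nthPrime n := by
  have hn₀ : n ≠ 0 := ne_zero_of_log_pos (by linarith)
  have hexp : exp 8 ≤ nthPrime n :=
    calc exp 8 ≤ n := (le_log_iff_exp_le (by positivity)).1 hn
      _ ≤ nthPrime n := mod_cast (lt_nthPrime n).le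
  simpa [primeCounting_nthPrime hn₀] using primeCounting_floor_mul_log_le hexp

variable {N : ℕ}

theorem log_nthPrime_add_one_le (hN : 16 ≤ log N) : log (nthPrime N + 1) ≤ 4 / 3 * log N := by
  have hN₁₀₀ := hundred_le_of_sixteen_le_log hN
  have hNp : (N : ℝ) < nthPrime N := mod_cast lt_nthPrime N
  have hN₀ : (0 : ℝ) < N := by linarith
  -- A crude bound for `log q` bounds `q` by a power of `N`; taking logarithms sharpens it.
  set q : ℝ := nthPrime N + 1
  have hq₀ : 0 < q := by positivity
  have hlog_q : log q ≤ 10 * q ^ (1 / 10 : ℝ) := by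
    linarith [log_le_rpow_div hq₀.le (show (0 : ℝ) < 1 / 10 by norm_num)]
  have hq_le : q ≤ 16 * N * q ^ (1 / 10 : ℝ) := by
    have : nthPrime N * 0.69 ≤ nthPrime N * log 2 := by
      gcongr
      linarith [log_two_gt_d9]
    have : (N + 1) * log q ≤ (N + 1) * (10 * q ^ (1 / 10 : ℝ)) := by gcongr
    have : 100 * q ^ (1 / 10 : ℝ) ≤ N * q ^ (1 / 10 : ℝ) := by gcongr
    linarith [nthPrime_mul_log_two_le (Nat.cast_pos.1 hN₀).ne']
  have hlog : log q ≤ 4 * log 2 + log N + 1 / 10 * log q := by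
    have := log_le_log hq₀ hq_le
    rwa [log_mul (by positivity) (by positivity), log_mul (by norm_num) hN₀.ne',
      log_rpow hq₀, show (16 : ℝ) = 2 ^ 4 by norm_num, log_pow, Nat.cast_ofNat] at this
  linarith [log_two_lt_d9]

theorem nthPrime_le_two_mul_log_mul (hN : 16 ≤ log N) : nthPrime N ≤ 2 * log N * N := by
  have hN₁₀₀ := hundred_le_of_sixteen_le_log hN
  have hN₀ : N ≠ 0 := ne_zero_of_log_pos (by linarith)
  refine le_of_mul_le_mul_right ?_ (log_pos one_lt_two)
  calc nthPrime N * log 2 ≤ (N + 1) * log (nthPrime N + 1) := nthPrime_mul_log_two_le hN₀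
    _ ≤ 101 / 100 * N * (4 / 3 * log N) := by
        gcongr
        · exact (log_nthPrime_add_one_pos N).le
        · linarith
        · exact log_nthPrime_add_one_le hN
    _ = 101 / 75 * (log N * N) := by ring
    _ ≤ 2 * log 2 * (log N * N) := by
        gcongr
        linarith [log_two_gt_d9]
    _ = 2 * log N * N * log 2 := by ring

theorem log_div_six_mul_le_nthPrime (hN : 16 ≤ log N) {n : ℕ} (hn : N ≤ n ^ 2) :
    log N / 6 * n ≤ nthPrime n := by
  have hN₀ : N ≠ 0 := ne_zero_of_log_pos (by linarith)
  have hlog : log N ≤ 2 * log n := by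
    calc log N ≤ log ((n : ℝ) ^ 2) := log_le_log (by positivity) (mod_cast hn)
      _ = 2 * log n := by rw [log_pow, Nat.cast_ofNat]
  have hn₀ : n ≠ 0 := ne_zero_of_log_pos (by linarith)
  have hlog_p : log n ≤ log (nthPrime n) :=
    log_le_log (by positivity) (mod_cast (lt_nthPrime n).le)
  have hmul : n * (log N / 2) ≤ n * log (nthPrime n) := by
    gcongr
    linarith
  linarith [mul_log_nthPrime_le (n := n) (by linarith)]

theorem log_nthPrime_add_one_div_log_two_mul_le (hN : 16 ≤ log N) :
    log (nthPrime N + 1) / log 2 * N ≤ 5 * nthPrime N := by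
  have hN₁₀₀ := hundred_le_of_sixteen_le_log hN
  have hNp : (N : ℝ) < nthPrime N := mod_cast lt_nthPrime N
  have hp₀ : (0 : ℝ) < nthPrime N := by linarith
  have hlog_p : 16 ≤ log (nthPrime N) := hN.trans (log_le_log (by linarith) hNp.le)
  have hlog_add_one : log (nthPrime N + 1) ≤ log 2 + log (nthPrime N) := by
    rw [← log_mul two_ne_zero hp₀.ne']
    exact log_le_log (by positivity) (by linarith)
  have hratio : log (nthPrime N + 1) / log 2 ≤ 5 / 3 * log (nthPrime N) := by
    rw [div_le_iff₀ (log_pos one_lt_two)]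
    have : 5 / 3 * log (nthPrime N) * 0.69 ≤ 5 / 3 * log (nthPrime N) * log 2 := by
      gcongr
      linarith [log_two_gt_d9]
    linarith [log_two_lt_d9]
  calc log (nthPrime N + 1) / log 2 * N ≤ 5 / 3 * log (nthPrime N) * N := by gcongr
    _ ≤ 5 * nthPrime N := by linarith [mul_log_nthPrime_le (n := N) (by linarith)]

end NthPrime

section SumRpowNeg

open Finset Real

variable {t : ℝ} {N : ℕ}

theorem sub_two_div_le_sum_nthPrime_rpow_neg (ht₀ : 0 ≤ t) (ht₁ : t < 1) (hN : N ≠ 0) :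
    (log (nthPrime N + 1) / log 2) ^ (-t) * (((N : ℝ) ^ (1 - t) - 2) / (1 - t)) ≤
      ∑ n ∈ Icc 1 (N - 1), (nthPrime n : ℝ) ^ (-t) := by
  have hp (n : ℕ) : (0 : ℝ) < nthPrime n := mod_cast (lt_nthPrime n).pos
  have hlog_two : 0 < log 2 := log_pos one_lt_two
  have hX : 0 < log (nthPrime N + 1) / log 2 := div_pos (log_nthPrime_add_one_pos N) hlog_two
  have hle : ∀ n ∈ Icc 1 (N - 1),
      (nthPrime n : ℝ) ≤ log (nthPrime N + 1) / log 2 * (n + 1) := fun n hn ↦ by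
    obtain ⟨hn₁, hnN⟩ := mem_Icc.1 hn
    rw [div_mul_eq_mul_div, le_div_iff₀ hlog_two, mul_comm (log _)]
    refine (nthPrime_mul_log_two_le (by lia)).trans ?_
    have : nthPrime n ≤ nthPrime N := nthPrime_monotone (by lia)
    gcongr
  convert le_sum_rpow_neg_of_le_mul_add_one ht₀ ht₁ hX (fun n _ ↦ hp n) hle using 5
  rw [← Nat.cast_add_one, Nat.sub_add_cancel (Nat.pos_of_ne_zero hN)]

theorem lt_one_sub_mul_rpow_mul_sum_nthPrime_rpow_neg (ht₀ : 0 ≤ t) (ht₁ : t < 1)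
    (hN : 16 ≤ log N) (hNt : 16 < (N : ℝ) ^ (1 - t)) :
    7 / 40 * N <
      (1 - t) * (nthPrime N : ℝ) ^ t * ∑ n ∈ Icc 1 (N - 1), (nthPrime n : ℝ) ^ (-t) := by
  have hs : 0 < 1 - t := sub_pos.2 ht₁
  have hN₀ : N ≠ 0 := ne_zero_of_log_pos (by linarith)
  set X := log (nthPrime N + 1) / log 2
  have hX : 0 < X := div_pos (log_nthPrime_add_one_pos N) (log_pos one_lt_two)
  have hp : X ^ t * (N : ℝ) ^ t ≤ 5 * (nthPrime N : ℝ) ^ t :=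
    calc X ^ t * (N : ℝ) ^ t = (X * N) ^ t := (mul_rpow hX.le N.cast_nonneg).symm
      _ ≤ (5 * nthPrime N) ^ t := by
        gcongr ?_ ^ t
        exact log_nthPrime_add_one_div_log_two_mul_le hN
      _ = 5 ^ t * (nthPrime N : ℝ) ^ t := mul_rpow (by norm_num) (Nat.cast_nonneg _)
      _ ≤ 5 * (nthPrime N : ℝ) ^ t := by
        gcongr
        exact rpow_le_self_of_one_le (by norm_num) ht₁.le
  calc 7 / 40 * (N : ℝ) = 7 / 8 * (N : ℝ) ^ (1 - t) * (N : ℝ) ^ t / 5 := by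
        rw [mul_assoc, ← rpow_add (by positivity), sub_add_cancel, rpow_one]
        ring
    _ < ((N : ℝ) ^ (1 - t) - 2) * (N : ℝ) ^ t / 5 := by
        gcongr
        linarith
    _ = (1 - t) * (X ^ t * (N : ℝ) ^ t / 5) *
          (X ^ (-t) * (((N : ℝ) ^ (1 - t) - 2) / (1 - t))) := by
        rw [rpow_neg hX.le]
        field_simp
    _ ≤ _ := by
        gcongr
        · exact mul_nonneg (by positivity) (div_nonneg (by linarith) hs.le)
        · linarith
        · exact sub_two_div_le_sum_nthPrime_rpow_neg ht₀ ht₁ hN₀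

theorem sum_nthPrime_rpow_neg_le (ht₀ : 0 ≤ t) (ht₁ : t < 1) (hN : 16 ≤ log N) :
    ∑ n ∈ Icc 1 (N - 1), (nthPrime n : ℝ) ^ (-t) ≤
      (N : ℝ) ^ ((1 - t) / 2) / (1 - t) + (log N / 6) ^ (-t) * ((N : ℝ) ^ (1 - t) / (1 - t)) := by
  have : 0 < 1 - t := sub_pos.2 ht₁
  have hN₁ : (1 : ℝ) < N := by linarith [hundred_le_of_sixteen_le_log hN]
  have hsqrt : (N.sqrt : ℝ) ^ (1 - t) ≤ (N : ℝ) ^ ((1 - t) / 2) :=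
    calc (N.sqrt : ℝ) ^ (1 - t) ≤ √(N : ℝ) ^ (1 - t) := by
          gcongr
          exact nat_sqrt_le_real_sqrt
      _ = (N : ℝ) ^ ((1 - t) / 2) := by
          rw [sqrt_eq_rpow, ← rpow_mul N.cast_nonneg, one_div_mul_eq_div]
  have hlarge : ∀ n ∈ Ioc N.sqrt (N - 1), log N / 6 * n ≤ nthPrime n := fun n hn ↦
    log_div_six_mul_le_nthPrime hN (Nat.sqrt_lt'.1 (mem_Ioc.1 hn).1).le
  refine (sum_rpow_neg_le_of_le_of_mul_le ht₀ ht₁ (by linarith)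
    (Nat.le_sub_one_of_lt (Nat.sqrt_lt_self (mod_cast hN₁)))
    (fun n _ ↦ mod_cast (lt_nthPrime n).le) hlarge).trans ?_
  gcongr
  exact Nat.sub_le N 1

theorem one_sub_mul_rpow_mul_sum_nthPrime_rpow_neg_lt (ht₀ : 0 ≤ t) (ht₁ : t < 1)
    (hN : 16 ≤ log N) (hNt : 4 * log N ≤ (N : ℝ) ^ ((1 - t) / 2)) :
    (1 - t) * (nthPrime N : ℝ) ^ t * ∑ n ∈ Icc 1 (N - 1), (nthPrime n : ℝ) ^ (-t) <
      20 / 3 * (2 ^ t * N) := by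
  have hs : 0 < 1 - t := sub_pos.2 ht₁
  have hN₀ : (0 : ℝ) < N := by linarith [hundred_le_of_sixteen_le_log hN]
  set L := log N
  have hL : 0 < L := by linarith
  have hp : (nthPrime N : ℝ) ^ t ≤ (2 * L) ^ t * (N : ℝ) ^ t := by
    rw [← mul_rpow (by positivity) hN₀.le]
    gcongr
    exact nthPrime_le_two_mul_log_mul hN
  have hsmall : (2 * L) ^ t * (N : ℝ) ^ ((1 - t) / 2) ≤ (N : ℝ) ^ (1 - t) / 2 :=
    calc (2 * L) ^ t * (N : ℝ) ^ ((1 - t) / 2)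
        ≤ (N : ℝ) ^ ((1 - t) / 2) / 2 * (N : ℝ) ^ ((1 - t) / 2) := by
          gcongr
          linarith [rpow_le_self_of_one_le (by linarith : 1 ≤ 2 * L) ht₁.le]
      _ = (N : ℝ) ^ (1 - t) / 2 := by
          rw [div_mul_eq_mul_div, ← rpow_add hN₀, add_halves]
  have htwo : 1 ≤ (2 : ℝ) ^ t := one_le_rpow one_le_two ht₀
  calc (1 - t) * (nthPrime N : ℝ) ^ t * ∑ n ∈ Icc 1 (N - 1), (nthPrime n : ℝ) ^ (-t)
      ≤ (1 - t) * ((2 * L) ^ t * (N : ℝ) ^ t) * ((N : ℝ) ^ ((1 - t) / 2) / (1 - t) +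
          (L / 6) ^ (-t) * ((N : ℝ) ^ (1 - t) / (1 - t))) := by
        gcongr
        exact sum_nthPrime_rpow_neg_le ht₀ ht₁ hN
    _ = ((2 * L) ^ t * (N : ℝ) ^ ((1 - t) / 2) +
          (2 * L) ^ t * (L / 6) ^ (-t) * (N : ℝ) ^ (1 - t)) * (N : ℝ) ^ t := by
        field_simp
    _ ≤ ((N : ℝ) ^ (1 - t) / 2 + 6 * 2 ^ t * (N : ℝ) ^ (1 - t)) * (N : ℝ) ^ t := by
        gcongr (?_ + ?_ * _) * _
        exact mul_rpow_mul_div_rpow_neg_le ht₁.le two_pos.le (by norm_num : (1 : ℝ) ≤ 6) hL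
    _ = (1 / 2 + 6 * 2 ^ t) * N := by
        rw [← one_div_mul_eq_div, ← add_mul, mul_assoc, ← rpow_add hN₀, sub_add_cancel, rpow_one]
    _ < 20 / 3 * 2 ^ t * N := by
        gcongr
        linarith
    _ = 20 / 3 * (2 ^ t * N) := mul_assoc _ _ _

end SumRpowNeg

theorem sum_reciprocal_prime_powers_vs_nth_prime_general {t : ℝ} (ht₀ : 0 ≤ t) (ht₁ : t < 1)
    {N : ℕ} (hN : Real.exp (16 / (1 - t) ^ 2) ≤ N) :
    7 / 40 * (N / ((1 - t) * (nthPrime N : ℝ) ^ t)) <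
        (∑ n ∈ Finset.Icc 1 (N - 1), (nthPrime n : ℝ) ^ (-t)) ∧
      (∑ n ∈ Finset.Icc 1 (N - 1), (nthPrime n : ℝ) ^ (-t)) <
        20 / 3 * (2 ^ t * N / ((1 - t) * (nthPrime N : ℝ) ^ t)) := by
  have hs : 0 < 1 - t := sub_pos.2 ht₁
  have hN₀ : (0 : ℝ) < N := (Real.exp_pos _).trans_le hN
  have hp₀ : (0 : ℝ) < nthPrime N := mod_cast (lt_nthPrime N).pos
  have hlog : 16 / (1 - t) ^ 2 ≤ Real.log N := (Real.le_log_iff_exp_le hN₀).2 hN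
  have hlog_ge : 16 ≤ Real.log N :=
    (le_div_self (by norm_num) (by positivity) (pow_le_one₀ hs.le (by linarith))).trans hlog
  have hhalf := four_mul_log_le_rpow_half hs (by linarith) hN₀ hlog
  have hpow : 16 < (N : ℝ) ^ (1 - t) :=
    calc (16 : ℝ) < (N : ℝ) ^ ((1 - t) / 2) := by linarith
      _ ≤ (N : ℝ) ^ (1 - t) := by
        gcongr
        · exact mod_cast hN₀
        · linarith
  rw [← mul_div_assoc, ← mul_div_assoc, div_lt_iff₀' (by positivity), lt_div_iff₀' (by positivity)]
  exact ⟨lt_one_sub_mul_rpow_mul_sum_nthPrime_rpow_neg ht₀ ht₁ hlog_ge hpow,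
    one_sub_mul_rpow_mul_sum_nthPrime_rpow_neg_lt ht₀ ht₁ hlog_ge hhalf⟩

theorem sum_reciprocal_prime_powers_vs_nth_prime
    (t : ℝ) (ht₁ : 1 / 2 < t) (ht₂ : t < 1)
    (n₁ : ℕ) (hn₁ : 2 * Real.exp (16 / (1 - t) ^ 2) ≤ (n₁ : ℝ)) :
    7 / 40 * ((n₁ : ℝ) / ((1 - t) * (nthPrime n₁ : ℝ) ^ t)) <
        (∑ n ∈ Finset.Icc 1 (n₁ - 1), (nthPrime n : ℝ) ^ (-t)) ∧
      (∑ n ∈ Finset.Icc 1 (n₁ - 1), (nthPrime n : ℝ) ^ (-t)) <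
        20 / 3 * ((2 : ℝ) ^ t * (n₁ : ℝ) / ((1 - t) * (nthPrime n₁ : ℝ) ^ t)) :=
  sum_reciprocal_prime_powers_vs_nth_prime_general (by linarith) ht₂
    (by linarith [Real.exp_pos (16 / (1 - t) ^ 2)])
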